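/- arXiv:1701.02522 — 2 statements merged into one kernel-verified Lean document; each statement's English description precedes it below -/
import Mathlib

section
/- Let N be a positive integer, let A⁰ and A¹ be the (N+1)×(N+1) isomerisation matrices, let f : ℝ → ℝ be continuous, and set 𝒜(s) = A⁰ + f(s)·A¹ (a matrix-valued function of s). Then for every t ≥ 0 the second term of the Magnus expansion evaluates to a multiple of A¹: ∫₀ᵗ [ ∫₀ˢ 𝒜(r) dr , 𝒜(s) ] ds = ( 2 ∫₀ᵗ (t − 2x) f(x) dx ) · A¹, where [X,Y] = XY − YX denotes the matrix commutator and matrix-valued integrals are taken entrywise. -/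
/-!
For constant matrices `A`, `B` and `F(s) = ∫₀ˢ f`, the commutator of `s A + F(s) B` with
`A + f(s) B` is `(s f(s) - F(s)) [A, B]`, and `∫₀ᵗ F = ∫₀ᵗ (t - x) f(x) dx` by integration by parts,
so the second Magnus term of `A + f B` is `(∫₀ᵗ (2x - t) f(x) dx) [A, B]`.

The isomerisation matrices satisfy `[A⁰, A¹] = -2 A¹` because they live in a representation of
`sl₂`: the superdiagonal part `U` and subdiagonal part `D` of `A⁰` and the diagonal part `H` of `A¹`
satisfy `[U, D] = H`, `[H, U] = 2U`, `[H, D] = -2D`, while `A⁰ = -N + U + D` and `A¹ = H + U - D`.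
-/

open intervalIntegral

def isoA0 (N : ℕ) : Matrix (Fin (N+1)) (Fin (N+1)) ℝ := fun k l =>
  if (k : ℕ) = (l : ℕ) then -(N : ℝ)
  else if (k : ℕ) + 1 = (l : ℕ) then ((l : ℕ) : ℝ)
  else if (k : ℕ) = (l : ℕ) + 1 then (N : ℝ) - ((l : ℕ) : ℝ)
  else 0

def isoA1 (N : ℕ) : Matrix (Fin (N+1)) (Fin (N+1)) ℝ := fun k l =>
  if (k : ℕ) = (l : ℕ) then (N : ℝ) - 2 * ((l : ℕ) : ℝ)
  else if (k : ℕ) + 1 = (l : ℕ) then ((l : ℕ) : ℝ)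
  else if (k : ℕ) = (l : ℕ) + 1 then -(N : ℝ) + ((l : ℕ) : ℝ)
  else 0

/-- Entrywise interval integral of a matrix-valued function. -/
noncomputable def matIntegral {n : ℕ} (f : ℝ → Matrix (Fin n) (Fin n) ℝ) (a b : ℝ) :
    Matrix (Fin n) (Fin n) ℝ :=
  fun i j => ∫ x in a..b, f x i j

open Set
open scoped Matrix
open MeasureTheory (volume)

attribute [local instance] LieRing.ofAssociativeRing

section LieAlgebra

variable {L : Type*} [LieRing L]

lemma lie_add_add_sub_of_sl2_relations {h e f : L} (hef : ⁅e, f⁆ = h) (hhe : ⁅h, e⁆ = 2 • e)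
    (hhf : ⁅h, f⁆ = -(2 • f)) : ⁅e + f, h + e - f⁆ = -(2 • (h + e - f)) := by
  have heh : ⁅e, h⁆ = -(2 • e) := by rw [← lie_skew, hhe]
  have hfh : ⁅f, h⁆ = 2 • f := by rw [← lie_skew, hhf, neg_neg]
  have hfe : ⁅f, e⁆ = -h := by rw [← lie_skew, hef]
  simp only [add_lie, lie_add, lie_sub, lie_self, heh, hfh, hef, hfe]
  abel

lemma lie_smul_add_smul {R : Type*} [CommRing R] [LieAlgebra R L] (a b c d : R) (x y : L) :
    ⁅a • x + b • y, c • x + d • y⁆ = (a * d - b * c) • ⁅x, y⁆ := by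
  simp only [add_lie, lie_add, smul_lie, lie_smul, lie_self, ← lie_skew y x]
  module

end LieAlgebra

section Superdiagonal

variable {R : Type*} {n : ℕ}

/-- The `n × n` matrix with entries `u 0, u 1, …, u (n - 2)` on the superdiagonal and zeros
elsewhere: a weighted shift, used to write raising operators and, transposed, lowering operators.
The weights are indexed by all of `ℕ`; those from `u (n - 1)` on are ignored. -/
def superdiagonal [Zero R] (n : ℕ) (u : ℕ → R) : Matrix (Fin n) (Fin n) R :=
  Matrix.of fun i j => if (i : ℕ) + 1 = j then u i else 0

lemma superdiagonal_apply [Zero R] (u : ℕ → R) (i j : Fin n) :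
    superdiagonal n u i j = if (i : ℕ) + 1 = j then u i else 0 :=
  rfl

lemma superdiagonal_mul_transpose_superdiagonal [NonUnitalNonAssocSemiring R] {u v p : ℕ → R}
    (hp : ∀ k, p (k + 1) = u k * v k) (hpn : p n = 0) :
    superdiagonal n u * (superdiagonal n v)ᵀ = Matrix.diagonal fun i : Fin n => p (i + 1) := by
  ext i j
  simp only [Matrix.mul_apply, Matrix.transpose_apply, superdiagonal_apply, Matrix.diagonal_apply,
    mul_ite, ite_mul, mul_zero, zero_mul]
  by_cases hi : (i : ℕ) + 1 < n
  · rw [Finset.sum_eq_single (⟨i + 1, hi⟩ : Fin n)] <;> grind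
  · have hi' : (i : ℕ) + 1 = n := by omega
    rw [hi', hpn, ite_self]
    exact Finset.sum_eq_zero fun k _ => by grind

lemma transpose_superdiagonal_mul_superdiagonal [NonUnitalNonAssocSemiring R] {u v p : ℕ → R}
    (hp : ∀ k, p (k + 1) = v k * u k) (hp0 : p 0 = 0) :
    (superdiagonal n v)ᵀ * superdiagonal n u = Matrix.diagonal fun i : Fin n => p i := by
  ext i j
  simp only [Matrix.mul_apply, Matrix.transpose_apply, superdiagonal_apply, Matrix.diagonal_apply,
    mul_ite, ite_mul, mul_zero, zero_mul]
  by_cases hi : (i : ℕ) = 0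
  · rw [hi, hp0, ite_self]
    exact Finset.sum_eq_zero fun k _ => by grind
  · obtain ⟨m, hm⟩ := Nat.exists_eq_succ_of_ne_zero hi
    rw [Finset.sum_eq_single (⟨m, by omega⟩ : Fin n)] <;> grind

lemma superdiagonal_lie_transpose_superdiagonal [CommRing R] {u v p : ℕ → R}
    (hp : ∀ k, p (k + 1) = u k * v k) (hp0 : p 0 = 0) (hpn : p n = 0) :
    ⁅superdiagonal n u, (superdiagonal n v)ᵀ⁆ =
      Matrix.diagonal fun i : Fin n => p (i + 1) - p i := by
  rw [Ring.lie_def, superdiagonal_mul_transpose_superdiagonal hp hpn,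
    transpose_superdiagonal_mul_superdiagonal (fun k => (hp k).trans (mul_comm _ _)) hp0,
    Matrix.diagonal_sub]

lemma diagonal_lie_superdiagonal [CommRing R] {h : ℕ → R} {c : R}
    (hc : ∀ k, h k - h (k + 1) = c) (u : ℕ → R) :
    ⁅Matrix.diagonal fun i : Fin n => h i, superdiagonal n u⁆ = c • superdiagonal n u := by
  ext i j
  simp only [Ring.lie_def, Matrix.sub_apply, Matrix.smul_apply, Matrix.diagonal_mul,
    Matrix.mul_diagonal, superdiagonal_apply, smul_eq_mul]
  split_ifs with hij
  · rw [← hij, ← hc i]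
    ring
  · ring

lemma diagonal_lie_transpose_superdiagonal [CommRing R] {h : ℕ → R} {c : R}
    (hc : ∀ k, h k - h (k + 1) = c) (u : ℕ → R) :
    ⁅Matrix.diagonal fun i : Fin n => h i, (superdiagonal n u)ᵀ⁆ = -(c • (superdiagonal n u)ᵀ) := by
  ext i j
  simp only [Ring.lie_def, Matrix.sub_apply, Matrix.neg_apply, Matrix.smul_apply,
    Matrix.diagonal_mul, Matrix.mul_diagonal, Matrix.transpose_apply, superdiagonal_apply,
    smul_eq_mul]
  split_ifs with hij
  · rw [← hij, ← hc j]
    ring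
  · ring

end Superdiagonal

section Isomerisation

/-- The raising operator of the `sl₂`-representation: the superdiagonal part of `A⁰`. -/
def isoRaising (N : ℕ) : Matrix (Fin (N + 1)) (Fin (N + 1)) ℝ :=
  superdiagonal (N + 1) fun k => (k : ℝ) + 1

/-- The lowering operator of the `sl₂`-representation: the subdiagonal part of `A⁰`. -/
def isoLowering (N : ℕ) : Matrix (Fin (N + 1)) (Fin (N + 1)) ℝ :=
  (superdiagonal (N + 1) fun k => (N : ℝ) - k)ᵀ

/-- The weight operator of the `sl₂`-representation: the diagonal part of `A¹`. -/
def isoWeight (N : ℕ) : Matrix (Fin (N + 1)) (Fin (N + 1)) ℝ :=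
  Matrix.diagonal fun k => (N : ℝ) - 2 * (k : ℕ)

lemma isoRaising_lie_isoLowering (N : ℕ) : ⁅isoRaising N, isoLowering N⁆ = isoWeight N := by
  rw [isoRaising, isoLowering,
    superdiagonal_lie_transpose_superdiagonal (p := fun k => (k : ℝ) * (N + 1 - k))
      (fun k => by push_cast; ring) (by simp) (by simp), isoWeight]
  congr 1
  ext k
  push_cast
  ring

lemma isoWeight_lie_isoRaising (N : ℕ) : ⁅isoWeight N, isoRaising N⁆ = 2 • isoRaising N := by
  rw [← ofNat_smul_eq_nsmul ℝ]
  exact diagonal_lie_superdiagonal (h := fun k => (N : ℝ) - 2 * k) (fun k => by push_cast; ring) _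

lemma isoWeight_lie_isoLowering (N : ℕ) :
    ⁅isoWeight N, isoLowering N⁆ = -(2 • isoLowering N) := by
  rw [← ofNat_smul_eq_nsmul ℝ]
  exact diagonal_lie_transpose_superdiagonal (h := fun k => (N : ℝ) - 2 * k)
    (fun k => by push_cast; ring) _

lemma isoA0_eq_add (N : ℕ) : isoA0 N = -(N : ℝ) • 1 + (isoRaising N + isoLowering N) := by
  ext k l
  simp only [isoA0, isoRaising, isoLowering, superdiagonal_apply, Matrix.add_apply,
    Matrix.smul_apply, Matrix.one_apply, Matrix.transpose_apply, Fin.ext_iff, smul_eq_mul]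
  have h_cast : (k : ℕ) + 1 = l → (l : ℝ) = k + 1 := fun hkl => by rw [← hkl, Nat.cast_succ]
  grind

lemma isoA1_eq_add_sub (N : ℕ) : isoA1 N = isoWeight N + isoRaising N - isoLowering N := by
  ext k l
  simp only [isoA1, isoWeight, isoRaising, isoLowering, superdiagonal_apply, Matrix.add_apply,
    Matrix.sub_apply, Matrix.diagonal_apply, Matrix.transpose_apply, Fin.ext_iff]
  have h_cast : (k : ℕ) + 1 = l → (l : ℝ) = k + 1 := fun hkl => by rw [← hkl, Nat.cast_succ]
  grind

lemma isoA0_lie_isoA1 (N : ℕ) : ⁅isoA0 N, isoA1 N⁆ = (-2 : ℝ) • isoA1 N := by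
  have h_one_lie (X : Matrix (Fin (N + 1)) (Fin (N + 1)) ℝ) :
      ⁅(1 : Matrix (Fin (N + 1)) (Fin (N + 1)) ℝ), X⁆ = 0 :=
    (Commute.one_left X).lie_eq
  rw [isoA0_eq_add, isoA1_eq_add_sub, add_lie, smul_lie, h_one_lie, smul_zero, zero_add,
    lie_add_add_sub_of_sl2_relations (isoRaising_lie_isoLowering N) (isoWeight_lie_isoRaising N)
      (isoWeight_lie_isoLowering N)]
  module

end Isomerisation

section Integral

variable {f : ℝ → ℝ} {a b : ℝ}

lemma integral_primitive_eq_integral_sub_mul (hf : IntervalIntegrable f volume a b) :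
    ∫ s in a..b, (∫ r in a..s, f r) = ∫ x in a..b, (b - x) * f x := by
  have hF := hf.absolutelyContinuousOnInterval_intervalIntegral left_mem_uIcc
  have hw : AbsolutelyContinuousOnInterval (fun s => s - b) a b :=
    (contDiff_id.sub contDiff_const).contDiffOn.absolutelyContinuousOnInterval
  have hF' : ∫ s in a..b, deriv (fun s => ∫ r in a..s, f r) s * (s - b) =
      ∫ s in a..b, f s * (s - b) := by
    refine integral_congr_ae ?_
    filter_upwards [hf.ae_hasDerivAt_integral] with s hs hsab
    rw [(hs (uIoc_subset_uIcc hsab) a left_mem_uIcc).deriv]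
  have by_parts := hF.integral_mul_deriv_eq_deriv_mul hw
  simp only [deriv_sub_const, deriv_id'', mul_one, sub_self, mul_zero, integral_same, zero_mul,
    zero_sub, hF', ← integral_neg] at by_parts
  rw [by_parts]
  exact integral_congr fun x _ => by ring

lemma integral_sub_mul_sub_primitive (hf : IntervalIntegrable f volume a b) :
    ∫ s in a..b, ((s - a) * f s - ∫ r in a..s, f r) = ∫ x in a..b, (2 * x - a - b) * f x := by
  have hF : IntervalIntegrable (fun s => ∫ r in a..s, f r) volume a b :=
    (continuousOn_primitive_interval' hf left_mem_uIcc).intervalIntegrable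
  have h_left : IntervalIntegrable (fun s => (s - a) * f s) volume a b :=
    hf.continuousOn_mul (by fun_prop)
  have h_right : IntervalIntegrable (fun s => (b - s) * f s) volume a b :=
    hf.continuousOn_mul (by fun_prop)
  rw [integral_sub h_left hF, integral_primitive_eq_integral_sub_mul hf,
    ← integral_sub h_left h_right]
  exact integral_congr fun x _ => by ring

end Integral

section MatIntegral

variable {n : ℕ} {a b : ℝ}

lemma matIntegral_congr {X Y : ℝ → Matrix (Fin n) (Fin n) ℝ} (h : EqOn X Y (uIcc a b)) :
    matIntegral X a b = matIntegral Y a b := by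
  ext i j
  exact integral_congr fun s hs => congr_fun₂ (h hs) i j

lemma matIntegral_smul_const (f : ℝ → ℝ) (A : Matrix (Fin n) (Fin n) ℝ) :
    matIntegral (fun s => f s • A) a b = (∫ s in a..b, f s) • A := by
  ext i j
  exact integral_mul_const (A i j) f

lemma matIntegral_const_add_smul {f : ℝ → ℝ} (hf : IntervalIntegrable f volume a b)
    (A B : Matrix (Fin n) (Fin n) ℝ) :
    matIntegral (fun s => A + f s • B) a b = (b - a) • A + (∫ s in a..b, f s) • B := by
  ext i j
  calc ∫ s in a..b, (A i j + f s * B i j)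
    _ = (∫ _ in a..b, A i j) + ∫ s in a..b, f s * B i j :=
      integral_add intervalIntegrable_const (hf.mul_const _)
    _ = (b - a) * A i j + (∫ s in a..b, f s) * B i j := by
      rw [integral_const, integral_mul_const, smul_eq_mul]

lemma matIntegral_lie_matIntegral_const_add_smul {f : ℝ → ℝ}
    (hf : IntervalIntegrable f volume a b) (A B : Matrix (Fin n) (Fin n) ℝ) :
    matIntegral (fun s => ⁅matIntegral (fun r => A + f r • B) a s, A + f s • B⁆) a b =
      (∫ x in a..b, (2 * x - a - b) * f x) • ⁅A, B⁆ := by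
  have h_commutator : EqOn (fun s => ⁅matIntegral (fun r => A + f r • B) a s, A + f s • B⁆)
      (fun s => ((s - a) * f s - ∫ r in a..s, f r) • ⁅A, B⁆) (uIcc a b) := fun s hs => by
    have hfs : IntervalIntegrable f volume a s := hf.mono_set (uIcc_subset_uIcc_left hs)
    simpa [matIntegral_const_add_smul hfs] using
      lie_smul_add_smul (s - a) (∫ r in a..s, f r) 1 (f s) A B
  rw [matIntegral_congr h_commutator, matIntegral_smul_const, integral_sub_mul_sub_primitive hf]

end MatIntegral

theorem magnus_second_term_isomerisation_general (N : ℕ) {f : ℝ → ℝ} {t : ℝ}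
    (hf : IntervalIntegrable f volume 0 t) :
    matIntegral (fun s =>
        (matIntegral (fun r => isoA0 N + f r • isoA1 N) 0 s) * (isoA0 N + f s • isoA1 N)
        - (isoA0 N + f s • isoA1 N) * (matIntegral (fun r => isoA0 N + f r • isoA1 N) 0 s)) 0 t
      = (2 * ∫ x in (0:ℝ)..t, (t - 2 * x) * f x) • isoA1 N := by
  simp only [← Ring.lie_def]
  rw [matIntegral_lie_matIntegral_const_add_smul hf, isoA0_lie_isoA1, smul_smul,
    ← integral_mul_const, ← integral_const_mul]
  congr 1
  exact integral_congr fun x _ => by ring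

/-- The second term of the Magnus expansion for the isomerisation master equation,
`∫₀ᵗ [∫₀ˢ 𝒜(r) dr, 𝒜(s)] ds` with `𝒜(s) = A⁰ + f(s)·A¹`, equals
`(2 ∫₀ᵗ (t - 2x) f(x) dx) · A¹`. -/
theorem magnus_second_term_isomerisation (N : ℕ) (hN : 0 < N)
    (f : ℝ → ℝ) (hf : Continuous f) (t : ℝ) (ht : 0 ≤ t) :
    matIntegral (fun s =>
        (matIntegral (fun r => isoA0 N + f r • isoA1 N) 0 s) * (isoA0 N + f s • isoA1 N)
        - (isoA0 N + f s • isoA1 N) * (matIntegral (fun r => isoA0 N + f r • isoA1 N) 0 s)) 0 t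
      = (2 * ∫ x in (0:ℝ)..t, (t - 2 * x) * f x) • isoA1 N :=
  magnus_second_term_isomerisation_general N (hf.intervalIntegrable 0 t)
end

section
/- Let N be a positive integer and let A⁰ be the (N+1)×(N+1) isomerisation matrix. Then the spectrum of A⁰, regarded as a complex matrix, is exactly the set { −2r : r = 0, 1, …, N }; that is, a complex number λ is an eigenvalue of A⁰ if and only if λ = −2r for some integer r with 0 ≤ r ≤ N. -/
/-!
Identify a vector `v` with the polynomial `∑ v_k X ^ k` of degree at most `N`. Then `A⁰` becomes
the first-order differential operator `p ↦ (1 - X ^ 2) p' + N (X - 1) p`, for which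
`(1 + X) ^ (N - r) * (1 - X) ^ r` is an eigenvector with eigenvalue `-2r`. These are already
`N + 1` distinct eigenvalues in dimension `N + 1`, so there is no other.
-/

open Polynomial

section Eigenvalues

variable {R M : Type*} [CommRing R] [IsDomain R] [AddCommGroup M] [Module R M]
  [Module.IsTorsionFree R M] [Module.Finite R M] {f : Module.End R M} {s : Finset R}

lemma card_le_finrank_of_forall_hasEigenvalue (hs : ∀ μ ∈ s, f.HasEigenvalue μ) :
    s.card ≤ Module.finrank R M := by
  choose v hv using fun μ : s => (hs μ μ.2).exists_hasEigenvector
  simpa using (f.eigenvectors_linearIndependent (s : Set R) v hv).fintype_card_le_finrank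

lemma hasEigenvalue_iff_mem_of_finrank_le_card (hs : ∀ μ ∈ s, f.HasEigenvalue μ)
    (hcard : Module.finrank R M ≤ s.card) {μ : R} : f.HasEigenvalue μ ↔ μ ∈ s := by
  classical
  refine ⟨fun hμ => ?_, hs μ⟩
  by_contra hμs
  have hle : (insert μ s).card ≤ Module.finrank R M :=
    card_le_finrank_of_forall_hasEigenvalue (Finset.forall_mem_insert _ _ _ |>.2 ⟨hμ, hs⟩)
  rw [Finset.card_insert_of_notMem hμs] at hle
  omega

end Eigenvalues

lemma hasEigenvalue_toLin'_iff {R n : Type*} [CommRing R] [Fintype n] [DecidableEq n]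
    {A : Matrix n n R} {μ : R} :
    Module.End.HasEigenvalue A.toLin' μ ↔ ∃ v : n → R, v ≠ 0 ∧ A.mulVec v = μ • v := by
  constructor
  · intro h
    obtain ⟨v, hv⟩ := h.exists_hasEigenvector
    exact ⟨v, hv.2, hv.apply_eq_smul⟩
  · rintro ⟨v, hv, hAv⟩
    exact Module.End.hasEigenvalue_of_hasEigenvector ⟨Module.End.mem_eigenspace_iff.2 hAv, hv⟩

lemma mul_derivative_pow {R : Type*} [CommSemiring R] (p : R[X]) (n : ℕ) :
    p * derivative (p ^ n) = (n : R[X]) * p ^ n * derivative p := by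
  cases n with
  | zero => simp
  | succ n =>
    simp only [derivative_pow_succ, map_add, map_natCast, map_one, Nat.cast_succ]
    ring

section IsoOperator

variable {R : Type*} [CommRing R]

/-- The differential operator `p ↦ (1 - X ^ 2) p' + N (X - 1) p`, which on polynomials of degree at
most `N` is represented by `A⁰` in the basis of monomials. -/
noncomputable def isoOperator (R : Type*) [CommRing R] (N : ℕ) : R[X] →ₗ[R] R[X] :=
  LinearMap.mulLeft R (1 - X ^ 2) ∘ₗ derivative + LinearMap.mulLeft R ((N : R[X]) * (X - 1))

lemma isoOperator_apply (N : ℕ) (p : R[X]) :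
    isoOperator R N p = (1 - X ^ 2) * derivative p + (N : R[X]) * (X - 1) * p :=
  rfl

lemma isoOperator_X_pow (N l : ℕ) :
    isoOperator R N (X ^ l)
      = C (l : R) * X ^ (l - 1) - C (N : R) * X ^ l + C ((N : R) - l) * X ^ (l + 1) := by
  rw [isoOperator_apply, derivative_X_pow]
  cases l with
  | zero =>
    simp only [map_natCast, map_sub, Nat.cast_zero, map_zero]
    ring
  | succ l =>
    simp only [map_natCast, map_sub, Nat.cast_succ, map_add, map_one, Nat.add_sub_cancel]
    ring

lemma coeff_isoOperator_X_pow (N k l : ℕ) :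
    (isoOperator R N (X ^ l)).coeff k
      = if k = l then -(N : R) else if k + 1 = l then (l : R)
        else if k = l + 1 then (N : R) - l else 0 := by
  simp only [isoOperator_X_pow, coeff_add, coeff_sub, coeff_C_mul, coeff_X_pow]
  rcases l with _ | l <;> split_ifs <;> first | omega | simp_all

lemma isoA0_map_apply [Algebra ℝ R] (N : ℕ) (k l : Fin (N + 1)) :
    (isoA0 N).map (algebraMap ℝ R) k l = (isoOperator R N (X ^ (l : ℕ))).coeff k := by
  simp only [Matrix.map_apply, isoA0, coeff_isoOperator_X_pow, apply_ite (algebraMap ℝ R), map_neg,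
    map_sub, map_natCast, map_zero]

lemma isoA0_mulVec_coeff [Algebra ℝ R] {N : ℕ} {p : R[X]} (hp : p.natDegree ≤ N) :
    ((isoA0 N).map (algebraMap ℝ R)).mulVec (fun l => p.coeff l)
      = fun k : Fin (N + 1) => (isoOperator R N p).coeff k := by
  funext k
  conv_rhs => rw [p.as_sum_range_C_mul_X_pow' (Nat.lt_succ_of_le hp)]
  simp only [Matrix.mulVec, dotProduct, isoA0_map_apply, ← smul_eq_C_mul, map_sum, map_smul,
    finsetSum_coeff, coeff_smul, smul_eq_mul, Finset.sum_range, mul_comm (p.coeff _)]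

/-- The generating polynomial `(1 + X) ^ a * (1 - X) ^ b` of an eigenvector of `A⁰` for the
eigenvalue `-2b`, where `N = a + b`. -/
noncomputable def isoPoly (R : Type*) [CommRing R] (a b : ℕ) : R[X] :=
  (1 + X) ^ a * (1 - X) ^ b

lemma natDegree_isoPoly_le (a b : ℕ) : (isoPoly R a b).natDegree ≤ a + b := by
  unfold isoPoly
  compute_degree

lemma coeff_zero_isoPoly (a b : ℕ) : (isoPoly R a b).coeff 0 = 1 := by
  simp [isoPoly, coeff_zero_eq_eval_zero]

lemma isoOperator_isoPoly (a b : ℕ) :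
    isoOperator R (a + b) (isoPoly R a b) = (-2 * (b : R)) • isoPoly R a b := by
  have hplus : (1 + X) * derivative ((1 + X : R[X]) ^ a) = (a : R[X]) * (1 + X) ^ a := by
    rw [mul_derivative_pow, derivative_add, derivative_one, derivative_X, zero_add, mul_one]
  have hminus : (1 - X) * derivative ((1 - X : R[X]) ^ b) = -((b : R[X]) * (1 - X) ^ b) := by
    rw [mul_derivative_pow, derivative_sub, derivative_one, derivative_X, zero_sub, mul_neg_one]
  simp only [isoOperator_apply, isoPoly, derivative_mul, smul_eq_C_mul, map_mul, map_neg,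
    map_natCast, map_ofNat, Nat.cast_add]
  linear_combination (1 - X) * (1 - X) ^ b * hplus + (1 + X) * (1 + X) ^ a * hminus

lemma hasEigenvalue_isoA0 [Nontrivial R] [Algebra ℝ R] {N r : ℕ} (hr : r ≤ N) :
    Module.End.HasEigenvalue ((isoA0 N).map (algebraMap ℝ R)).toLin' (-2 * (r : R)) := by
  obtain ⟨a, rfl⟩ := Nat.exists_eq_add_of_le' hr
  refine hasEigenvalue_toLin'_iff.2 ⟨fun l : Fin (a + r + 1) => (isoPoly R a r).coeff l,
    fun h => ?_, ?_⟩
  · simpa [coeff_zero_isoPoly] using congrFun h 0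
  · rw [isoA0_mulVec_coeff (natDegree_isoPoly_le a r), isoOperator_isoPoly]
    simp only [coeff_smul, ← Pi.smul_def]

end IsoOperator

theorem spectrum_isoA0_general {R : Type*} [CommRing R] [IsDomain R] [Algebra ℝ R] (N : ℕ)
    (lam : R) :
    (∃ v : Fin (N + 1) → R, v ≠ 0 ∧
        ((isoA0 N).map (algebraMap ℝ R)).mulVec v = lam • v)
      ↔ ∃ r : ℕ, r ≤ N ∧ lam = -2 * (r : R) := by
  classical
  have : CharZero R := charZero_of_injective_algebraMap (algebraMap ℝ R).injective
  have hinj : Function.Injective fun r : ℕ => -2 * (r : R) := fun r s h => by simpa using h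
  let eigenvalues : Finset R := (Finset.range (N + 1)).image fun r : ℕ => -2 * (r : R)
  have heigen : ∀ μ ∈ eigenvalues,
      Module.End.HasEigenvalue ((isoA0 N).map (algebraMap ℝ R)).toLin' μ :=
    Finset.forall_mem_image.2 fun _ hr => hasEigenvalue_isoA0 (Finset.mem_range_succ_iff.1 hr)
  have hcard : Module.finrank R (Fin (N + 1) → R) ≤ eigenvalues.card := by
    rw [Finset.card_image_of_injective _ hinj, Finset.card_range, Module.finrank_fin_fun]
  rw [← hasEigenvalue_toLin'_iff, hasEigenvalue_iff_mem_of_finrank_le_card heigen hcard]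
  simp only [eigenvalues, Finset.mem_image, Finset.mem_range_succ_iff, eq_comm]

/-- The spectrum of `A⁰` (regarded as a complex matrix) is `{−2r : r = 0,…,N}`:
a complex number `λ` is an eigenvalue of `A⁰` iff `λ = −2r` for some `0 ≤ r ≤ N`. -/
theorem spectrum_isoA0 (N : ℕ) (hN : 0 < N) (lam : ℂ) :
    (∃ v : Fin (N+1) → ℂ, v ≠ 0 ∧
        ((isoA0 N).map (algebraMap ℝ ℂ)).mulVec v = lam • v)
      ↔ ∃ r : ℕ, r ≤ N ∧ lam = -2 * (r : ℂ) :=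
  spectrum_isoA0_general N lam
end
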